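/- Let R be a local ring whose maximal ideal M is finitely generated, regular, and the radical of a principal ideal m·R, where m is necessarily a nonzerodivisor. Let C = ∩_{k>0} m^k R, let A = R/C, and let T = R[1/m] (which equals the Nagata transform T(M)). Then: (i) C is an ideal of T; (ii) A is a generalized local ring whose maximal ideal M/C is regular (the image of m in A is a nonzerodivisor) and is the radical of a principal ideal of A; (iii) the Nagata transform of the maximal ideal of A equals T/C; and (iv) T is a semilocal ring. -/

import Mathlib

/-!
Write `M` for the maximal ideal of `R`. Some power of `M` lies in `mR`, because `M` is finitely
generated with `M = √(mR)`; and `m` divides a power of a regular element of `M`, so `m` is regular.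
Consequently `mⁿx ∈ C ↔ x ∈ C` (`pow_mul_mem_iInf_iff`), which gives the stability of `C` under
division by `m` and the regularity of `m` on `A = R/C`. As the powers of `M` and of `m` are
cofinal, the powers of `M/C` intersect in zero.

The Nagata transform of `M/C` consists, again by cofinality, of the fractions with denominator a
power of the image of `m` (`mem_nagataTransform_iff`). This is the image of the canonical map
`R[1/m] → Q(A)`, whose kernel is the extension of `C`.

Semilocality of `T = R[1/m]` comes from a length count. The ring `R/mR` has finite length `ℓ`.
Given `n` distinct maximal ideals of `T` with contractions `p₁, …, pₙ` to `R`, put `V = ∏ R/pᵢ` and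
let `B` be the image of `R` in `V`. By the Chinese remainder theorem in `T`, some power of `m` sends
`V` into `B`, so `V/B` has finite length. As `m` is regular on `V`, comparing lengths gives
`length (V/mV) ≤ length (R/mR) = ℓ` (`length_quotient_smul_le`). Each of the `n` factors of `V/mV`
is nonzero, so `n ≤ ℓ`.
-/

set_option synthInstance.maxHeartbeats 400000
set_option maxHeartbeats 800000

open scoped nonZeroDivisors

/-- A semilocal ring: a commutative ring with only finitely many maximal ideals. -/
def IsSemilocalRing (R : Type*) [CommRing R] : Prop := {I : Ideal R | I.IsMaximal}.Finite

/-- The Nagata transform `T(I) = ⋃_{k>0} (S :_{Q(S)} I^k)` of an ideal `I`, as a subalgebra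
of the total quotient ring of `S`.  (The union is already a subring containing `S`, so
taking `Algebra.adjoin` of it does not change the underlying set.) -/
def nagataTransform (S : Type*) [CommRing S] (I : Ideal S) :
    Subalgebra S (Localization S⁰) :=
  Algebra.adjoin S (⋃ k : ℕ,
    ((1 / IsLocalization.coeSubmodule (Localization S⁰) (I ^ (k + 1)) :
      Submodule S (Localization S⁰)) : Set (Localization S⁰)))

/-! ### Semilocality of `R[1/m]` -/

/-- In a local ring with finitely generated maximal ideal, a finite module killed by an ideal
whose radical is the maximal ideal has finite length: the quotient by that ideal is Noetherian by
Cohen's theorem and zero-dimensional, hence Artinian. -/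
lemma isFiniteLength_of_annihilated {R : Type*} [CommRing R] [IsLocalRing R]
    (hfg : (IsLocalRing.maximalIdeal R).FG) (J : Ideal R)
    (hJ : IsLocalRing.maximalIdeal R = J.radical)
    (N : Type*) [AddCommGroup N] [Module R N] [Module.Finite R N]
    (hN : ∀ a ∈ J, ∀ x : N, a • x = 0) : IsFiniteLength R N := by
  have hprime : ∀ P : Ideal (R ⧸ J), P.IsPrime →
      P.comap (Ideal.Quotient.mk J) = IsLocalRing.maximalIdeal R := by
    intro P hP
    have hP' : (P.comap (Ideal.Quotient.mk J)).IsPrime := Ideal.IsPrime.comap _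
    refine le_antisymm (IsLocalRing.le_maximalIdeal hP'.ne_top) ?_
    rw [hJ, hP'.radical_le_iff]
    intro a ha
    rw [Ideal.mem_comap, Ideal.Quotient.eq_zero_iff_mem.mpr ha]
    exact P.zero_mem
  have hsurj : Function.Surjective (Ideal.Quotient.mk J) := Ideal.Quotient.mk_surjective
  have : IsNoetherianRing (R ⧸ J) := by
    refine IsNoetherianRing.of_prime fun P hP => ?_
    rw [← Ideal.map_comap_of_surjective _ hsurj P, hprime P hP]
    exact hfg.map _
  have : Ring.KrullDimLE 0 (R ⧸ J) := by
    refine Ring.KrullDimLE.mk₀ fun P hP => ?_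
    have hmax : (P.comap (Ideal.Quotient.mk J)).IsMaximal := by
      rw [hprime P hP]; infer_instance
    rw [← Ideal.map_comap_of_surjective _ hsurj P]
    refine (Ideal.map_eq_top_or_isMaximal_of_surjective _ hsurj hmax).resolve_left ?_
    rw [Ideal.map_comap_of_surjective _ hsurj P]
    exact hP.ne_top
  have hT : Module.IsTorsionBySet R N (J : Set R) := fun x a => hN a a.2 x
  let _ : Module (R ⧸ J) N := hT.module
  have : IsScalarTower R (R ⧸ J) N := hT.isScalarTower
  have : Module.Finite (R ⧸ J) N := Module.Finite.of_restrictScalars_finite R _ _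
  have : IsArtinianRing (R ⧸ J) := isArtinianRing_iff_krullDimLE_zero.mpr ‹_›
  have : IsArtinian (R ⧸ J) N := isArtinian_of_fg_of_artinian'
  have hlen : Module.length (R ⧸ J) N ≠ ⊤ := Module.length_ne_top
  rw [← Module.length_ne_top_iff]
  rwa [Module.length_eq_of_surjective (S := R) (R := R ⧸ J) (M := N) hsurj]

/-- If `m` acts injectively on `V` and the image `B` of `f : R → V` has finite colength, then
`V / mV` is at most as long as `R / mR`. This compares the two exact sequences
`0 → V/B → V/mB → V/mV → 0` (the first map being multiplication by `m`) and
`R/mR → V/mB → V/B → 0`. -/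
lemma length_quotient_smul_le {R V : Type*} [CommRing R] [AddCommGroup V] [Module R V]
    (m : R) (hm : Function.Injective (LinearMap.lsmul R V m)) (f : R →ₗ[R] V)
    (hN : IsFiniteLength R (V ⧸ LinearMap.range f)) :
    Module.length R (V ⧸ LinearMap.range (LinearMap.lsmul R V m)) ≤
      Module.length R (R ⧸ Ideal.span {m}) := by
  set μ := LinearMap.lsmul R V m with hμ
  set B := LinearMap.range f
  set D := B.map μ
  have hDB : D ≤ B := by
    rintro _ ⟨b, hb, rfl⟩
    exact B.smul_mem m hb
  have hDμ : D ≤ LinearMap.range μ := LinearMap.map_le_range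
  have hBD : B ≤ D.comap μ := Submodule.le_comap_map _ _
  have e1 : Module.length R (V ⧸ D) =
      Module.length R (V ⧸ B) + Module.length R (V ⧸ LinearMap.range μ) := by
    refine Module.length_eq_add_of_exact (B.mapQ D μ hBD) (Submodule.factor hDμ) ?_ ?_ ?_
    · rw [← LinearMap.ker_eq_bot, Submodule.ker_mapQ, Submodule.comap_map_eq_of_injective hm,
        ← le_bot_iff, Submodule.map_le_iff_le_comap, Submodule.comap_bot, Submodule.ker_mkQ]
    · exact Submodule.factor_surjective hDμ
    · intro x
      obtain ⟨v, rfl⟩ := Submodule.Quotient.mk_surjective _ x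
      constructor
      · intro h
        have h' : v ∈ LinearMap.range μ := (Submodule.Quotient.mk_eq_zero _).mp h
        obtain ⟨w, rfl⟩ := h'
        exact ⟨Submodule.Quotient.mk w, rfl⟩
      · rintro ⟨y, hy⟩
        obtain ⟨w, rfl⟩ := Submodule.Quotient.mk_surjective _ y
        rw [← hy]
        exact (Submodule.Quotient.mk_eq_zero _).mpr ⟨w, rfl⟩
  have hk : Ideal.span {m} ≤ LinearMap.ker (D.mkQ ∘ₗ f) := by
    rw [Ideal.span_singleton_le_iff_mem, LinearMap.mem_ker]
    refine (Submodule.Quotient.mk_eq_zero _).mpr ⟨f 1, ⟨1, rfl⟩, ?_⟩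
    rw [hμ, LinearMap.lsmul_apply, ← map_smul, smul_eq_mul, mul_one]
  have e2 : Module.length R (V ⧸ D) ≤
      Module.length R (R ⧸ Ideal.span {m}) + Module.length R (V ⧸ B) := by
    have h := Module.length_eq_add_of_exact (LinearMap.ker (Submodule.factor hDB)).subtype
      (Submodule.factor hDB) (Submodule.subtype_injective _) (Submodule.factor_surjective hDB)
      (LinearMap.exact_subtype_ker_map _)
    rw [h]
    gcongr
    have hle : ∀ x, (Submodule.liftQ _ (D.mkQ ∘ₗ f) hk) x ∈
        LinearMap.ker (Submodule.factor hDB) := by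
      intro x
      obtain ⟨r, rfl⟩ := Submodule.Quotient.mk_surjective _ x
      exact (Submodule.Quotient.mk_eq_zero _).mpr ⟨r, rfl⟩
    refine Module.length_le_of_surjective
      (LinearMap.codRestrict _ (Submodule.liftQ _ (D.mkQ ∘ₗ f) hk) hle) ?_
    rintro ⟨y, hy⟩
    obtain ⟨v, rfl⟩ := Submodule.Quotient.mk_surjective _ y
    have h' : v ∈ B := (Submodule.Quotient.mk_eq_zero _).mp hy
    obtain ⟨r, rfl⟩ := h'
    exact ⟨Submodule.Quotient.mk r, rfl⟩
  have hfin : Module.length R (V ⧸ B) ≠ ⊤ := Module.length_ne_top_iff.mpr hN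
  rw [e1, add_comm] at e2
  exact (ENat.add_le_add_iff_right hfin).mp e2

/-- The number of maximal ideals of `R[1/m]` is bounded by the length of `R / mR`. -/
lemma card_maximalIdeals_le_length {R : Type*} [CommRing R] [IsLocalRing R]
    (hfg : (IsLocalRing.maximalIdeal R).FG)
    (m : R) (hrad : IsLocalRing.maximalIdeal R = (Ideal.span {m}).radical)
    (n : ℕ) (P : Fin n → Ideal (Localization.Away m)) (hP : ∀ i, (P i).IsMaximal)
    (hinj : Function.Injective P) :
    (n : ℕ∞) ≤ Module.length R (R ⧸ Ideal.span {m}) := by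
  classical
  set T := Localization.Away m
  let p : Fin n → Ideal R := fun i => (P i).comap (algebraMap R T)
  have hp : ∀ i, (p i).IsPrime := fun i => haveI := (hP i).isPrime; Ideal.IsPrime.comap _
  have hmu : IsUnit (algebraMap R T m) := IsLocalization.Away.algebraMap_isUnit m
  have hmp : ∀ i, m ∉ p i := fun i h => (hP i).ne_top (Ideal.eq_top_of_isUnit_mem _ h hmu)
  have hmM : m ∈ IsLocalRing.maximalIdeal R := by
    rw [hrad]; exact Ideal.le_radical (Ideal.mem_span_singleton_self m)
  let V := ∀ i, R ⧸ p i
  let f : R →ₗ[R] V := LinearMap.pi fun i => (p i).mkQ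
  have hinjm : Function.Injective (LinearMap.lsmul R V m) := by
    rw [injective_iff_map_eq_zero]
    intro v hv
    funext i
    obtain ⟨r, hr⟩ := Ideal.Quotient.mk_surjective (v i)
    have h : m • v i = 0 := congrFun hv i
    rw [← hr, ← Ideal.Quotient.mkₐ_eq_mk R, ← map_smul, Ideal.Quotient.mkₐ_eq_mk,
      Ideal.Quotient.eq_zero_iff_mem, smul_eq_mul] at h
    rw [← hr]
    exact Ideal.Quotient.eq_zero_iff_mem.mpr (((hp i).mem_or_mem h).resolve_left (hmp i))
  -- The idempotents of `∏ T / P i` lift to `T`; clearing denominators puts `m ^ k` times the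
  -- `i`-th standard idempotent of `V` into the image of `R`.
  have hidem : ∀ i, ∃ k : ℕ, ∃ x : R, f x = Pi.single i (Ideal.Quotient.mk (p i) (m ^ k)) := by
    intro i
    obtain ⟨t, ht⟩ := Ideal.pi_quotient_surjective (I := P)
      (fun a b hab => by
        have := hP a; have := hP b
        exact Ideal.isCoprime_of_isMaximal (fun h => hab (hinj h))) (Pi.single i 1)
    obtain ⟨k, x, hx⟩ := IsLocalization.Away.surj m t
    refine ⟨k, x, ?_⟩
    funext j
    by_cases hij : j = i
    · subst hij
      rw [Pi.single_eq_same]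
      refine Ideal.Quotient.eq.mpr ?_
      change algebraMap R T (x - m ^ k) ∈ P j
      have h1 := ht j
      rw [Pi.single_eq_same, ← map_one (Ideal.Quotient.mk (P j)), Ideal.Quotient.eq] at h1
      rw [map_sub, ← hx, map_pow]
      have := (P j).mul_mem_right (algebraMap R T m ^ k) h1
      rwa [sub_mul, one_mul] at this
    · rw [Pi.single_eq_of_ne hij]
      refine Ideal.Quotient.eq_zero_iff_mem.mpr ?_
      change algebraMap R T x ∈ P j
      have h1 := ht j
      rw [Pi.single_eq_of_ne hij, Ideal.Quotient.eq_zero_iff_mem] at h1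
      rw [← hx]
      exact (P j).mul_mem_right _ h1
  choose k x hx using hidem
  set K := ∑ i, k i
  have hkK : ∀ i, k i ≤ K := fun i => Finset.single_le_sum (f := k) (by simp) (Finset.mem_univ i)
  have hkill : ∀ v : V, m ^ K • v ∈ LinearMap.range f := by
    intro v
    have hv : m ^ K • v = ∑ i, Pi.single i (m ^ K • v i) := by
      rw [Finset.univ_sum_single (f := fun i => m ^ K • v i)]; rfl
    rw [hv]
    refine Submodule.sum_mem _ fun i _ => ?_
    obtain ⟨r, hr⟩ := Ideal.Quotient.mk_surjective (v i)
    have : Pi.single i (m ^ K • v i) = f ((r * m ^ (K - k i)) • x i) := by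
      rw [map_smul, hx]
      funext j
      by_cases hij : j = i
      · subst hij
        rw [Pi.smul_apply, Pi.single_eq_same, Pi.single_eq_same, ← hr]
        change Ideal.Quotient.mk _ (m ^ K * r) = Ideal.Quotient.mk _ (r * m ^ (K - k j) * m ^ k j)
        rw [mul_assoc, ← pow_add, Nat.sub_add_cancel (hkK j), mul_comm]
      · rw [Pi.smul_apply, Pi.single_eq_of_ne hij, Pi.single_eq_of_ne hij, smul_zero]
    rw [this]
    exact LinearMap.mem_range_self _ _
  -- The exponent `K + 1` is positive, so that `m ^ (K + 1)` still has radical the maximal ideal.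
  have hN : IsFiniteLength R (V ⧸ LinearMap.range f) := by
    refine isFiniteLength_of_annihilated hfg (Ideal.span {m} ^ (K + 1)) ?_ _ ?_
    · rw [Ideal.radical_pow _ (Nat.succ_ne_zero K), hrad]
    · intro a ha y
      obtain ⟨v, rfl⟩ := Submodule.Quotient.mk_surjective _ y
      rw [Ideal.span_singleton_pow, Ideal.mem_span_singleton] at ha
      obtain ⟨b, rfl⟩ := ha
      rw [← Submodule.Quotient.mk_smul, Submodule.Quotient.mk_eq_zero]
      have : (m ^ (K + 1) * b) • v = (m * b) • (m ^ K • v) := by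
        rw [smul_smul]; ring_nf
      rw [this]
      exact Submodule.smul_mem _ _ (hkill v)
  refine le_trans ?_ (length_quotient_smul_le m hinjm f hN)
  -- `V / mV` surjects onto the `n`-fold power of the residue field.
  have hres : ∀ i, p i ≤ IsLocalRing.maximalIdeal R := fun i =>
    IsLocalRing.le_maximalIdeal (hp i).ne_top
  let q : V →ₗ[R] (Fin n → R ⧸ IsLocalRing.maximalIdeal R) :=
    LinearMap.pi fun i => Submodule.factor (hres i) ∘ₗ LinearMap.proj i
  have hq : Function.Surjective q := by
    intro w
    choose r hr using fun i => Ideal.Quotient.mk_surjective (w i)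
    exact ⟨fun i => Ideal.Quotient.mk _ (r i), funext hr⟩
  have hqk : LinearMap.range (LinearMap.lsmul R V m) ≤ LinearMap.ker q := by
    rintro _ ⟨v, rfl⟩
    rw [LinearMap.mem_ker, LinearMap.lsmul_apply, map_smul]
    funext i
    obtain ⟨r, hr⟩ := Ideal.Quotient.mk_surjective (q v i)
    rw [Pi.smul_apply, ← hr]
    exact Ideal.Quotient.eq_zero_iff_mem.mpr (Ideal.mul_mem_right _ _ hmM)
  have hle := Module.length_le_of_surjective (Submodule.liftQ _ q hqk) (by
    intro w
    obtain ⟨v, rfl⟩ := hq w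
    exact ⟨Submodule.Quotient.mk v, rfl⟩)
  refine le_trans (le_of_eq ?_) hle
  have : IsSimpleModule R (R ⧸ IsLocalRing.maximalIdeal R) :=
    isSimpleModule_iff_isCoatom.mpr (IsLocalRing.maximalIdeal.isMaximal R).out
  rw [Module.length_pi_of_fintype]
  simp [Module.length_eq_one]

lemma isSemilocalRing_away {R : Type*} [CommRing R] [IsLocalRing R]
    (hfg : (IsLocalRing.maximalIdeal R).FG)
    (m : R) (hrad : IsLocalRing.maximalIdeal R = (Ideal.span {m}).radical) :
    IsSemilocalRing (Localization.Away m) := by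
  have hfin : Module.length R (R ⧸ Ideal.span {m}) ≠ ⊤ := by
    rw [Module.length_ne_top_iff]
    refine isFiniteLength_of_annihilated hfg _ hrad _ ?_
    intro a ha y
    obtain ⟨v, rfl⟩ := Ideal.Quotient.mk_surjective y
    exact Ideal.Quotient.eq_zero_iff_mem.mpr (Ideal.mul_mem_right _ _ ha)
  obtain ⟨l, hl⟩ := ENat.ne_top_iff_exists.mp hfin
  by_contra hinf
  obtain ⟨s, hs, hcard⟩ := Set.Infinite.exists_subset_card_eq hinf (l + 1)
  let e := (s.equivFin.trans (finCongr hcard)).symm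
  have h := card_maximalIdeals_le_length hfg m hrad (l + 1) (fun i => (e i : Ideal _))
    (fun i => hs (e i).2) (fun i j hij => e.injective (Subtype.ext hij))
  rw [← hl, Nat.cast_le] at h
  omega

/-! ### The ideal `⋂ mᵏR` -/

lemma mem_iInf_span_pow_iff {R : Type*} [CommRing R] (m x : R) :
    x ∈ (⨅ k : ℕ, Ideal.span {m} ^ (k + 1)) ↔ ∀ k : ℕ, ∃ d, x = m ^ (k + 1) * d := by
  simp only [Ideal.mem_iInf, Ideal.span_singleton_pow, Ideal.mem_span_singleton]
  rfl

/-- For a nonzerodivisor `m`, multiplication by a power of `m` neither leaves nor enters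
`C = ⋂ mᵏR`. -/
lemma pow_mul_mem_iInf_iff {R : Type*} [CommRing R] {m : R} (hm : m ∈ R⁰) (C : Ideal R)
    (hC : C = ⨅ k : ℕ, Ideal.span {m} ^ (k + 1)) (n : ℕ) (x : R) :
    m ^ n * x ∈ C ↔ x ∈ C := by
  refine ⟨fun h => ?_, fun h => C.mul_mem_left _ h⟩
  rw [hC, mem_iInf_span_pow_iff] at h ⊢
  intro k
  obtain ⟨d, hd⟩ := h (n + k)
  refine ⟨d, ?_⟩
  have hmn : m ^ n ∈ R⁰ := pow_mem hm n
  rw [add_assoc, pow_add, mul_assoc] at hd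
  exact (mul_cancel_left_mem_nonZeroDivisors hmn).mp hd

/-- Elements of `C` are divisible by every power of `m` inside `C`, so `C` is stable under
multiplication by `1/m`. -/
lemma coe_map_away_eq_image {R : Type*} [CommRing R] {m : R} (hm : m ∈ R⁰) (C : Ideal R)
    (hC : C = ⨅ k : ℕ, Ideal.span {m} ^ (k + 1)) :
    (C.map (algebraMap R (Localization.Away m)) : Set (Localization.Away m)) =
      (algebraMap R (Localization.Away m)) '' (C : Set R) := by
  apply Set.Subset.antisymm
  · intro t ht
    obtain ⟨⟨c, s⟩, hcs⟩ :=
      (IsLocalization.mem_map_algebraMap_iff (Submonoid.powers m) (Localization.Away m)).mp ht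
    obtain ⟨s, n, rfl⟩ := s
    have hc : (c : R) ∈ ⨅ k : ℕ, Ideal.span {m} ^ (k + 1) := hC ▸ c.2
    obtain ⟨d, hd⟩ := (mem_iInf_span_pow_iff m c).mp hc n
    refine ⟨m * d, ?_, ?_⟩
    · refine (pow_mul_mem_iInf_iff hm C hC n (m * d)).mp ?_
      rw [← mul_assoc, ← pow_succ, ← hd]
      exact c.2
    · have hu : IsUnit (algebraMap R (Localization.Away m) (m ^ n)) := by
        rw [map_pow]
        exact (IsLocalization.Away.algebraMap_isUnit m).pow n
      refine hu.mul_right_cancel ?_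
      rw [← map_mul]
      change _ = t * algebraMap R (Localization.Away m) (m ^ n)
      rw [hcs]
      congr 1
      change m * d * m ^ n = (c : R)
      rw [hd]; ring
  · rintro _ ⟨c, hc, rfl⟩
    exact Ideal.mem_map_of_mem _ hc

/-! ### The Nagata transform -/

/-- If the powers of `I` and of one of its elements `a` are cofinal, the Nagata transform of `I`
consists of the `y` with some `aᵏ y` in `A`; for regular `a` these are the fractions `x / aᵏ`. -/
lemma mem_nagataTransform_iff {A : Type*} [CommRing A] (I : Ideal A) (a : A)
    (haI : a ∈ I) (N : ℕ) (hN : I ^ N ≤ Ideal.span {a})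
    (y : Localization A⁰) :
    y ∈ nagataTransform A I ↔
      ∃ k : ℕ, ∃ x : A, algebraMap A (Localization A⁰) (a ^ k) * y = algebraMap A _ x := by
  constructor
  · intro hy
    induction hy using Algebra.adjoin_induction with
    | mem y hy =>
      obtain ⟨k, hk⟩ := Set.mem_iUnion.mp hy
      have h := Submodule.mem_div_iff_forall_mul_mem.mp hk (algebraMap A _ (a ^ (k + 1)))
        ⟨a ^ (k + 1), Ideal.pow_mem_pow haI _, rfl⟩
      obtain ⟨x, hx⟩ := Submodule.mem_one.mp h
      exact ⟨k + 1, x, by rw [hx, mul_comm]⟩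
    | algebraMap r => exact ⟨0, r, by simp⟩
    | add y z _ _ hy hz =>
      obtain ⟨k, x, hx⟩ := hy
      obtain ⟨l, w, hw⟩ := hz
      refine ⟨k + l, a ^ l * x + a ^ k * w, ?_⟩
      simp only [map_add, map_mul, pow_add] at *
      rw [← hx, ← hw]; ring
    | mul y z _ _ hy hz =>
      obtain ⟨k, x, hx⟩ := hy
      obtain ⟨l, w, hw⟩ := hz
      refine ⟨k + l, x * w, ?_⟩
      simp only [map_mul, pow_add] at *
      rw [← hx, ← hw]; ring
  · rintro ⟨k, x, hx⟩
    refine Algebra.subset_adjoin (Set.mem_iUnion.mpr ⟨N * k, ?_⟩)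
    refine Submodule.mem_div_iff_forall_mul_mem.mpr ?_
    rintro _ ⟨z, hz, rfl⟩
    have hz' : z ∈ Ideal.span {a} ^ k := by
      refine Ideal.pow_right_mono hN k ?_
      rw [← pow_mul]
      exact Ideal.pow_le_pow_right (Nat.le_succ _) hz
    rw [Ideal.span_singleton_pow, Ideal.mem_span_singleton] at hz'
    obtain ⟨b, rfl⟩ := hz'
    refine Submodule.mem_one.mpr ⟨x * b, ?_⟩
    rw [Algebra.linearMap_apply, map_mul, map_mul, ← hx]; ring

/-- The isomorphism is induced by `R[1/m] → Q(R/C)`, whose kernel is the extension of `C` and whose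
image is the set of fractions `x / mᵏ`. -/
lemma exists_nagataTransform_equiv {R : Type*} [CommRing R] {m : R} (C I : Ideal R)
    (hmC : Ideal.Quotient.mk C m ∈ (R ⧸ C)⁰) (hmI : m ∈ I)
    (N : ℕ) (hN : I ^ N ≤ Ideal.span {m}) :
    ∃ e : nagataTransform (R ⧸ C) (I.map (Ideal.Quotient.mk C))
        ≃+* (Localization.Away m ⧸ C.map (algebraMap R (Localization.Away m))),
      ∀ r : R,
        e (algebraMap (R ⧸ C)
            (nagataTransform (R ⧸ C) (I.map (Ideal.Quotient.mk C)))
            (Ideal.Quotient.mk C r)) =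
          Ideal.Quotient.mk (C.map (algebraMap R (Localization.Away m)))
            (algebraMap R (Localization.Away m) r) := by
  set T := Localization.Away m
  set A := R ⧸ C
  set Q := Localization A⁰
  set a : A := Ideal.Quotient.mk C m
  let g : R →+* Q := (algebraMap A Q).comp (Ideal.Quotient.mk C)
  have hu : IsUnit (g m) := IsLocalization.map_units Q (⟨a, hmC⟩ : A⁰)
  let φ : T →+* Q := IsLocalization.Away.lift m hu
  have hφ : ∀ r, φ (algebraMap R T r) = g r := fun r => IsLocalization.Away.lift_eq m hu r
  have hAQ : Function.Injective (algebraMap A Q) := IsLocalization.injective Q le_rfl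
  have hmT : IsUnit (algebraMap R T m) := IsLocalization.Away.algebraMap_isUnit m
  have hNA : (I.map (Ideal.Quotient.mk C)) ^ N ≤ Ideal.span {a} := by
    rw [← Ideal.map_pow]
    refine (Ideal.map_mono hN).trans ?_
    rw [Ideal.map_span, Set.image_singleton]
  have hmem := mem_nagataTransform_iff (I.map (Ideal.Quotient.mk C)) a
    (Ideal.mem_map_of_mem _ hmI) N hNA
  have hker : ∀ t, t ∈ C.map (algebraMap R T) ↔ φ t = 0 := by
    intro t
    constructor
    · intro ht
      have hle : C.map (algebraMap R T) ≤ RingHom.ker φ := by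
        rw [Ideal.map_le_iff_le_comap]
        intro c hc
        rw [Ideal.mem_comap, RingHom.mem_ker, hφ]
        change algebraMap A Q (Ideal.Quotient.mk C c) = 0
        rw [Ideal.Quotient.eq_zero_iff_mem.mpr hc, map_zero]
      exact hle ht
    · intro ht
      obtain ⟨k, x, hx⟩ := IsLocalization.Away.surj m t
      have h : g x = 0 := by rw [← hφ, ← hx, map_mul, ht, zero_mul]
      have h2 : Ideal.Quotient.mk C x = 0 := hAQ (by rw [map_zero]; exact h)
      have h3 := Ideal.mem_map_of_mem (algebraMap R T) (Ideal.Quotient.eq_zero_iff_mem.mp h2)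
      rw [← hx] at h3
      exact (Ideal.mul_unit_mem_iff_mem _ (hmT.pow k)).mp h3
  have hrange : ∀ t, φ t ∈ nagataTransform A (I.map (Ideal.Quotient.mk C)) := by
    intro t
    obtain ⟨k, x, hx⟩ := IsLocalization.Away.surj m t
    refine (hmem _).mpr ⟨k, Ideal.Quotient.mk C x, ?_⟩
    have h := congrArg φ hx
    rw [map_mul, map_pow, hφ, hφ] at h
    rw [map_pow, mul_comm]
    exact h
  let ψ : T →+* nagataTransform A (I.map (Ideal.Quotient.mk C)) :=
    φ.codRestrict _ hrange
  let χ : (T ⧸ C.map (algebraMap R T)) →+* nagataTransform A (I.map (Ideal.Quotient.mk C)) :=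
    Ideal.Quotient.lift _ ψ fun t ht => Subtype.ext ((hker t).mp ht)
  have hχ : Function.Bijective χ := by
    constructor
    · rw [injective_iff_map_eq_zero]
      intro t ht
      obtain ⟨t, rfl⟩ := Ideal.Quotient.mk_surjective t
      exact Ideal.Quotient.eq_zero_iff_mem.mpr ((hker t).mpr (congrArg Subtype.val ht))
    · rintro ⟨y, hy⟩
      obtain ⟨k, x, hx⟩ := (hmem y).mp hy
      obtain ⟨x, rfl⟩ := Ideal.Quotient.mk_surjective x
      obtain ⟨u, hu1⟩ := hmT.pow k
      refine ⟨Ideal.Quotient.mk _ (algebraMap R T x * ↑u⁻¹), Subtype.ext ?_⟩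
      change φ (algebraMap R T x * ↑u⁻¹) = y
      refine (hu.pow k).mul_left_cancel ?_
      have e1 : g m ^ k * y = g x := by
        rw [map_pow] at hx
        exact hx
      rw [e1, ← hφ m, ← map_pow, ← hu1, ← map_mul, mul_left_comm, Units.mul_inv, mul_one, hφ]
  refine ⟨(RingEquiv.ofBijective χ hχ).symm, fun r => ?_⟩
  rw [RingEquiv.symm_apply_eq]
  refine Subtype.ext ?_
  change algebraMap A Q (Ideal.Quotient.mk C r) = φ (algebraMap R T r)
  rw [hφ]
  rfl

/-! ### The decomposition -/

/-- Let `R` be a local ring whose maximal ideal `M` is finitely generated, regular, and the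
radical of a principal ideal `m·R` (so `m` is necessarily a nonzerodivisor).  Let
`C = ∩_{k>0} m^k R`, `A = R/C` and `T = R[1/m]`.  Then (i) `C` is an ideal of `T`;
(ii) `A` is a generalized local ring whose maximal ideal `M/C` is regular and the radical
of a principal ideal of `A`; (iii) the Nagata transform of the maximal ideal of `A` equals
`T/C`; and (iv) `T` is a semilocal ring. -/
theorem glr_pullback_decomposition {R : Type*} [CommRing R] [IsLocalRing R]
    (hfg : (IsLocalRing.maximalIdeal R).FG)
    (hreg : ∃ r ∈ IsLocalRing.maximalIdeal R, r ∈ R⁰)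
    (m : R) (hrad : IsLocalRing.maximalIdeal R = (Ideal.span {m}).radical)
    (C : Ideal R) (hC : C = ⨅ k : ℕ, Ideal.span {m} ^ (k + 1)) :
    -- `m` is necessarily a nonzerodivisor
    m ∈ R⁰ ∧
    -- (i) `C` is an ideal of `T = R[1/m]`
    ((C.map (algebraMap R (Localization.Away m)) : Set (Localization.Away m)) =
      (algebraMap R (Localization.Away m)) '' (C : Set R)) ∧
    -- (ii) `A = R/C` is a generalized local ring with regular maximal ideal `M/C`
    -- that is the radical of a principal ideal
    (IsLocalRing (R ⧸ C) ∧
     ((IsLocalRing.maximalIdeal R).map (Ideal.Quotient.mk C)).FG ∧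
     (⨅ i : ℕ, ((IsLocalRing.maximalIdeal R).map (Ideal.Quotient.mk C)) ^ (i + 1) = ⊥) ∧
     Ideal.Quotient.mk C m ∈ (R ⧸ C)⁰ ∧
     (IsLocalRing.maximalIdeal R).map (Ideal.Quotient.mk C) =
       (Ideal.span {Ideal.Quotient.mk C m}).radical) ∧
    -- (iii) the Nagata transform of the maximal ideal of `A` equals `T/C`
    (∃ e : nagataTransform (R ⧸ C) ((IsLocalRing.maximalIdeal R).map (Ideal.Quotient.mk C))
        ≃+* (Localization.Away m ⧸ C.map (algebraMap R (Localization.Away m))),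
      ∀ r : R,
        e (algebraMap (R ⧸ C)
            (nagataTransform (R ⧸ C) ((IsLocalRing.maximalIdeal R).map (Ideal.Quotient.mk C)))
            (Ideal.Quotient.mk C r)) =
          Ideal.Quotient.mk (C.map (algebraMap R (Localization.Away m)))
            (algebraMap R (Localization.Away m) r)) ∧
    -- (iv) `T` is semilocal
    IsSemilocalRing (Localization.Away m) := by
  have hmM : m ∈ IsLocalRing.maximalIdeal R := by
    rw [hrad]; exact Ideal.le_radical (Ideal.mem_span_singleton_self m)
  have hm : m ∈ R⁰ := by
    obtain ⟨r, hrM, hr⟩ := hreg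
    rw [hrad] at hrM
    obtain ⟨n, hn⟩ := hrM
    obtain ⟨b, hb⟩ := Ideal.mem_span_singleton.mp hn
    exact (mul_mem_nonZeroDivisors.mp (hb ▸ pow_mem hr n)).1
  have hCm : C ≤ Ideal.span {m} := by
    rw [hC]
    exact (iInf_le _ 0).trans (by simp)
  have hCM : C ≤ IsLocalRing.maximalIdeal R :=
    hCm.trans ((Ideal.span_singleton_le_iff_mem _).mpr hmM)
  have hCtop : C ≠ ⊤ := fun h => (IsLocalRing.maximalIdeal.isMaximal R).ne_top
    (top_le_iff.mp (h ▸ hCM))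
  have : Nontrivial (R ⧸ C) := Ideal.Quotient.nontrivial_iff.mpr hCtop
  have hsurj : Function.Surjective (Ideal.Quotient.mk C) := Ideal.Quotient.mk_surjective
  obtain ⟨N, hN⟩ : ∃ N, IsLocalRing.maximalIdeal R ^ N ≤ Ideal.span {m} := by
    have h := Ideal.exists_radical_pow_le_of_fg (Ideal.span {m}) (hrad ▸ hfg)
    rwa [← hrad] at h
  have hmC : Ideal.Quotient.mk C m ∈ (R ⧸ C)⁰ := by
    rw [mem_nonZeroDivisors_iff_right]
    intro y hy
    obtain ⟨x, rfl⟩ := hsurj y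
    rw [← map_mul, Ideal.Quotient.eq_zero_iff_mem] at hy
    refine Ideal.Quotient.eq_zero_iff_mem.mpr ((pow_mul_mem_iInf_iff hm C hC 1 x).mp ?_)
    rwa [pow_one, mul_comm]
  refine ⟨hm, coe_map_away_eq_image hm C hC,
    ⟨IsLocalRing.of_surjective' _ hsurj, hfg.map _, ?_, hmC, ?_⟩,
    exists_nagataTransform_equiv C _ hmC hmM N hN, isSemilocalRing_away hfg m hrad⟩
  · rw [eq_bot_iff]
    intro y hy
    obtain ⟨x, rfl⟩ := hsurj y
    refine Ideal.Quotient.eq_zero_iff_mem.mpr ?_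
    rw [hC, Ideal.mem_iInf]
    intro k
    have h := Ideal.mem_iInf.mp hy (N * (k + 1))
    have h2 := Ideal.pow_le_pow_right (Nat.le_succ _) h
    rw [← Ideal.map_pow, pow_mul] at h2
    have h3 := Ideal.map_mono (f := Ideal.Quotient.mk C) (Ideal.pow_right_mono hN (k + 1)) h2
    have hker : RingHom.ker (Ideal.Quotient.mk C) ≤ Ideal.span {m} ^ (k + 1) := by
      rw [Ideal.mk_ker, hC]
      exact iInf_le _ k
    rwa [← Ideal.mem_comap, Ideal.comap_map_of_surjective' _ hsurj, sup_eq_left.mpr hker] at h3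
  · rw [hrad, Ideal.map_radical_of_surjective hsurj (by rwa [Ideal.mk_ker]), Ideal.map_span,
      Set.image_singleton]
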